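/- Let K ⊆ ℝⁿ be a convex body and let a, b > 0 satisfy b < 2a. Then (∫_K e^{−b‖x‖²} dx) · (∫_K e^{−(2a−b)‖x‖²} dx) ≤ (a² / (b(2a − b)))^{n+1} · (∫_K e^{−a‖x‖²} dx)². -/

import Mathlib

open MeasureTheory Real Set Metric

/-!
If `φ` is convex, so is its perspective `(a, x) ↦ a φ(x / a)`. Hence the integrand of
`aⁿ ∫_K e^{-a φ} = ∫ 1_K(x / a) e^{-a φ(x / a)} dx` is jointly log-concave in `(a, x)`, and the
Prékopa–Leindler inequality makes `a ↦ aⁿ ∫_K e^{-a φ}` log-concave. For `φ = ‖·‖²`, comparing the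
midpoint `a` with the endpoints `b` and `2a - b` gives the bound with exponent `n`, and
`b (2a - b) ≤ a²` raises the exponent to `n + 1`.

On the line, the Prékopa–Leindler inequality is the Brunn–Minkowski inequality for superlevel sets,
integrated over the levels. It is inherited by product measures, linear images and multiples, and
so holds for every Haar measure.
-/

open Module (finrank)
open scoped ENNReal NNReal Pointwise

section BrunnMinkowski

theorem volume_add_volume_le_volume_add_of_isCompact {A B : Set ℝ} (hA : IsCompact A)
    (hB : IsCompact B) (hAne : A.Nonempty) (hBne : B.Nonempty) :
    volume A + volume B ≤ volume (A + B) := by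
  obtain ⟨p, hpA, hp⟩ := hA.exists_isGreatest hAne
  obtain ⟨q, hqB, hq⟩ := hB.exists_isLeast hBne
  -- The translates `q + A` and `p + B` lie in `A + B` and meet only at `p + q`.
  have overlap : (q +ᵥ A) ∩ (p +ᵥ B) ⊆ {p + q} := by
    rintro _ ⟨⟨x, hx, rfl⟩, y, hy, hxy⟩
    have hxp := hp hx
    have hqy := hq hy
    simp only [vadd_eq_add] at hxy
    simp only [vadd_eq_add, mem_singleton_iff]
    linarith
  calc volume A + volume B = volume (q +ᵥ A) + volume (p +ᵥ B) := by simp only [measure_vadd]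
    _ = volume ((q +ᵥ A) ∪ (p +ᵥ B)) :=
      (measure_union₀ (hB.vadd p).measurableSet.nullMeasurableSet
        (measure_mono_null overlap (measure_singleton _))).symm
    _ ≤ volume (A + B) := by
      refine measure_mono (union_subset ?_ ?_)
      · rw [add_comm A B]
        exact vadd_set_subset_add hqB
      · exact vadd_set_subset_add hpA

theorem volume_add_volume_le_volume_add {A B : Set ℝ} (hA : MeasurableSet A)
    (hB : MeasurableSet B) (hAne : A.Nonempty) (hBne : B.Nonempty) :
    volume A + volume B ≤ volume (A + B) := by
  obtain ⟨a, ha⟩ := hAne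
  obtain ⟨b, hb⟩ := hBne
  rw [hA.measure_eq_iSup_isCompact, hB.measure_eq_iSup_isCompact]
  simp only [iSup_and']
  refine ENNReal.biSup_add_biSup_le' (p := fun K : Set ℝ ↦ K ⊆ A ∧ IsCompact K)
    (q := fun L : Set ℝ ↦ L ⊆ B ∧ IsCompact L)
    ⟨∅, empty_subset _, isCompact_empty⟩ ⟨∅, empty_subset _, isCompact_empty⟩ ?_
  rintro K ⟨hKA, hK⟩ L ⟨hLB, hL⟩
  calc volume K + volume L ≤ volume (insert a K) + volume (insert b L) := by
        gcongr <;> exact subset_insert _ _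
    _ ≤ volume (insert a K + insert b L) :=
      volume_add_volume_le_volume_add_of_isCompact (hK.insert a) (hL.insert b)
        (insert_nonempty _ _) (insert_nonempty _ _)
    _ ≤ volume (A + B) := by
      gcongr
      exacts [insert_subset ha hKA, insert_subset hb hLB]

theorem ofReal_mul_volume_add_le_volume_smul_add_smul {A B : Set ℝ} (hA : MeasurableSet A)
    (hB : MeasurableSet B) (hAne : A.Nonempty) (hBne : B.Nonempty) {s t : ℝ} (hs : 0 < s)
    (ht : 0 < t) :
    ENNReal.ofReal s * volume A + ENNReal.ofReal t * volume B ≤ volume (s • A + t • B) := by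
  have key := volume_add_volume_le_volume_add (hA.const_smul₀ s) (hB.const_smul₀ t)
    (hAne.smul_set (a := s)) (hBne.smul_set (a := t))
  simpa [Measure.addHaar_smul_of_nonneg volume hs.le,
    Measure.addHaar_smul_of_nonneg volume ht.le] using key

end BrunnMinkowski

/-- The Prékopa–Leindler inequality as a property of a measure. Integrals are lower Lebesgue
integrals, so that only the majorant `h` has to be measurable. -/
def PrekopaLeindler {E : Type*} [AddCommGroup E] [Module ℝ E] [MeasurableSpace E]
    (μ : Measure E) : Prop :=
  ∀ ⦃s t : ℝ⦄, 0 < s → 0 < t → s + t = 1 → ∀ ⦃f g h : E → ℝ≥0∞⦄, Measurable h →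
    (∀ x y, f x ^ s * g y ^ t ≤ h (s • x + t • y)) →
      (∫⁻ x, f x ∂μ) ^ s * (∫⁻ x, g x ∂μ) ^ t ≤ ∫⁻ x, h x ∂μ

section RealLine

theorem volume_restrict_Ioi_setOf_ofReal_lt (c : ℝ≥0∞) :
    volume.restrict (Ioi 0) {r : ℝ | ENNReal.ofReal r < c} = c := by
  rw [Measure.restrict_apply (measurableSet_lt (by fun_prop) measurable_const)]
  induction c with
  | top => simp
  | coe c =>
    have : {r : ℝ | ENNReal.ofReal r < c} ∩ Ioi 0 = Ioo 0 (c : ℝ) := by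
      ext r
      simp only [mem_inter_iff, mem_ofPred_eq, mem_Ioi, mem_Ioo, and_comm (b := 0 < r)]
      refine and_congr_right fun hr ↦ ?_
      rw [ENNReal.ofReal_lt_iff_lt_toReal hr.le ENNReal.coe_ne_top, ENNReal.coe_toReal]
    rw [this, Real.volume_Ioo, sub_zero, ENNReal.ofReal_coe_nnreal]

-- Unlike in `lintegral_eq_lintegral_meas_lt`, `f` may take the value `∞`.
theorem lintegral_eq_lintegral_meas_ofReal_lt {α : Type*} [MeasurableSpace α] (μ : Measure α)
    [SFinite μ] {f : α → ℝ≥0∞} (hf : Measurable f) :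
    ∫⁻ x, f x ∂μ = ∫⁻ r in Ioi 0, μ {x | ENNReal.ofReal r < f x} := by
  have hmeas : MeasurableSet {p : α × ℝ | ENNReal.ofReal p.2 < f p.1} :=
    measurableSet_lt (by fun_prop) (by fun_prop)
  calc ∫⁻ x, f x ∂μ = ∫⁻ x, volume.restrict (Ioi 0) {r : ℝ | ENNReal.ofReal r < f x} ∂μ := by
        simp only [volume_restrict_Ioi_setOf_ofReal_lt]
    _ = (μ.prod (volume.restrict (Ioi 0))) {p | ENNReal.ofReal p.2 < f p.1} :=
      (Measure.prod_apply hmeas).symm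
    _ = ∫⁻ r in Ioi 0, μ {x | ENNReal.ofReal r < f x} := Measure.prod_apply_symm hmeas

theorem geom_mean_le_arith_mean2_weighted_ennreal (a b : ℝ≥0∞) {s t : ℝ} (hs : 0 < s)
    (ht : 0 < t) (hst : s + t = 1) :
    a ^ s * b ^ t ≤ ENNReal.ofReal s * a + ENNReal.ofReal t * b := by
  have hconj : s⁻¹.HolderConjugate t⁻¹ := .inv_inv hs ht hst
  have := ENNReal.young_inequality (a ^ s) (b ^ t) hconj
  simpa [ENNReal.rpow_rpow_inv hs.ne', ENNReal.rpow_rpow_inv ht.ne', ENNReal.ofReal_inv_of_pos hs,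
    ENNReal.ofReal_inv_of_pos ht, div_eq_mul_inv, mul_comm] using this

variable {f g h : ℝ → ℝ≥0∞} {s t : ℝ}

theorem volume_superlevel_add_le (hf : Measurable f) (hg : Measurable g) (hs : 0 < s)
    (ht : 0 < t) (hst : s + t = 1) (H : ∀ x y, f x ^ s * g y ^ t ≤ h (s • x + t • y)) {c : ℝ≥0∞}
    (hfc : ∃ x, c < f x) (hgc : ∃ x, c < g x) :
    ENNReal.ofReal s * volume {x | c < f x} + ENNReal.ofReal t * volume {x | c < g x} ≤
      volume {x | c < h x} := by
  refine (ofReal_mul_volume_add_le_volume_smul_add_smul (measurableSet_lt measurable_const hf)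
    (measurableSet_lt measurable_const hg) hfc hgc hs ht).trans (measure_mono ?_)
  rintro _ ⟨_, ⟨x, hx, rfl⟩, _, ⟨y, hy, rfl⟩, rfl⟩
  calc c = c ^ s * c ^ t := by
        rw [← ENNReal.rpow_add_of_nonneg _ _ hs.le ht.le, hst, ENNReal.rpow_one]
    _ < f x ^ s * g y ^ t :=
      ENNReal.mul_lt_mul (ENNReal.rpow_lt_rpow hx hs) (ENNReal.rpow_lt_rpow hy ht)
    _ ≤ h (s • x + t • y) := H x y

theorem lintegral_add_lintegral_le_of_iSup_eq_one (hf : Measurable f) (hg : Measurable g)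
    (hh : Measurable h) (hf_sup : (⨆ x, f x) = 1) (hg_sup : (⨆ x, g x) = 1) (hs : 0 < s)
    (ht : 0 < t) (hst : s + t = 1) (H : ∀ x y, f x ^ s * g y ^ t ≤ h (s • x + t • y)) :
    ENNReal.ofReal s * (∫⁻ x, f x) + ENNReal.ofReal t * (∫⁻ x, g x) ≤ ∫⁻ x, h x := by
  have measurable_superlevel (u : ℝ → ℝ≥0∞) :
      Measurable fun r ↦ volume {x | ENNReal.ofReal r < u x} :=
    Antitone.measurable fun _ _ hr ↦
      measure_mono fun _ hx ↦ (ENNReal.ofReal_le_ofReal hr).trans_lt hx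
  rw [lintegral_eq_lintegral_meas_ofReal_lt volume hf,
    lintegral_eq_lintegral_meas_ofReal_lt volume hg,
    lintegral_eq_lintegral_meas_ofReal_lt volume hh,
    ← lintegral_const_mul _ (measurable_superlevel f),
    ← lintegral_const_mul _ (measurable_superlevel g),
    ← lintegral_add_left ((measurable_superlevel f).const_mul _)]
  refine lintegral_mono fun r ↦ ?_
  rcases lt_or_ge (ENNReal.ofReal r) 1 with hr | hr
  · exact volume_superlevel_add_le hf hg hs ht hst H (lt_iSup_iff.1 (hf_sup ▸ hr))
      (lt_iSup_iff.1 (hg_sup ▸ hr))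
  · have superlevel_eq_empty {u : ℝ → ℝ≥0∞} (hu : (⨆ x, u x) = 1) :
        {x | ENNReal.ofReal r < u x} = ∅ :=
      eq_empty_of_forall_notMem fun x hx ↦ (((le_iSup u x).trans_eq hu).trans hr).not_gt hx
    simp [superlevel_eq_empty hf_sup, superlevel_eq_empty hg_sup]

theorem lintegral_rpow_mul_lintegral_rpow_le_of_iSup_ne_top (hf : Measurable f)
    (hg : Measurable g) (hh : Measurable h) (hf_sup : (⨆ x, f x) ≠ ∞) (hg_sup : (⨆ x, g x) ≠ ∞)
    (hs : 0 < s) (ht : 0 < t) (hst : s + t = 1)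
    (H : ∀ x y, f x ^ s * g y ^ t ≤ h (s • x + t • y)) :
    (∫⁻ x, f x) ^ s * (∫⁻ x, g x) ^ t ≤ ∫⁻ x, h x := by
  rcases eq_or_ne (⨆ x, f x) 0 with hP | hP
  · simp [ENNReal.iSup_eq_zero.1 hP, hs]
  rcases eq_or_ne (⨆ x, g x) 0 with hQ | hQ
  · simp [ENNReal.iSup_eq_zero.1 hQ, ht]
  set P := ⨆ x, f x
  set Q := ⨆ x, g x
  set c := P⁻¹ ^ s * Q⁻¹ ^ t
  have mul_rpow_mul_mul_rpow (a b : ℝ≥0∞) :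
      (P⁻¹ * a) ^ s * (Q⁻¹ * b) ^ t = c * (a ^ s * b ^ t) := by
    rw [ENNReal.mul_rpow_of_nonneg _ _ hs.le, ENNReal.mul_rpow_of_nonneg _ _ ht.le,
      mul_mul_mul_comm]
  have hc_zero : c ≠ 0 := by simp [c, hf_sup, hg_sup, hs.le, ht.le]
  have hc_top : c ≠ ∞ := by
    refine ENNReal.mul_ne_top ?_ ?_
    · exact ENNReal.rpow_ne_top_of_nonneg hs.le (ENNReal.inv_ne_top.2 hP)
    · exact ENNReal.rpow_ne_top_of_nonneg ht.le (ENNReal.inv_ne_top.2 hQ)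
  rw [← ENNReal.mul_le_mul_iff_right hc_zero hc_top]
  calc c * ((∫⁻ x, f x) ^ s * (∫⁻ x, g x) ^ t)
      = (∫⁻ x, P⁻¹ * f x) ^ s * (∫⁻ x, Q⁻¹ * g x) ^ t := by
        rw [lintegral_const_mul _ hf, lintegral_const_mul _ hg, mul_rpow_mul_mul_rpow]
    _ ≤ ENNReal.ofReal s * (∫⁻ x, P⁻¹ * f x) + ENNReal.ofReal t * (∫⁻ x, Q⁻¹ * g x) :=
      geom_mean_le_arith_mean2_weighted_ennreal _ _ hs ht hst
    _ ≤ ∫⁻ x, c * h x := by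
      refine lintegral_add_lintegral_le_of_iSup_eq_one (by fun_prop) (by fun_prop) (by fun_prop)
        ?_ ?_ hs ht hst fun x y ↦ ?_
      · rw [← ENNReal.mul_iSup, ENNReal.inv_mul_cancel hP hf_sup]
      · rw [← ENNReal.mul_iSup, ENNReal.inv_mul_cancel hQ hg_sup]
      · rw [mul_rpow_mul_mul_rpow]
        gcongr
        exact H x y
    _ = c * ∫⁻ x, h x := lintegral_const_mul _ hh

theorem prekopaLeindler_volume_real : PrekopaLeindler (volume : Measure ℝ) := by
  intro s t hs ht hst f g h hh H
  have exists_bounded {u : ℝ → ℝ≥0∞} {p : ℝ} (hp : 0 < p) {c : ℝ≥0∞}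
      (hc : c < (∫⁻ x, u x) ^ p) : ∃ v : ℝ → ℝ≥0∞, Measurable v ∧ v ≤ u ∧ (⨆ x, v x) ≠ ∞ ∧
        c < (∫⁻ x, v x) ^ p := by
    rw [← ENNReal.rpow_inv_lt_iff hp, lintegral_eq_nnreal] at hc
    simp only [lt_iSup_iff] at hc
    obtain ⟨φ, hφu, hφ⟩ := hc
    refine ⟨fun x ↦ φ x, by fun_prop, hφu, ?_, ?_⟩
    · obtain ⟨M, hM⟩ := φ.finite_range.bddAbove
      exact ne_top_of_le_ne_top ENNReal.coe_ne_top
        (iSup_le fun x ↦ ENNReal.coe_le_coe.2 (hM (mem_range_self x)))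
    · rw [← ENNReal.rpow_inv_lt_iff hp]
      rwa [← SimpleFunc.lintegral_eq_lintegral] at hφ
  refine ENNReal.mul_le_of_forall_lt fun a ha b hb ↦ ?_
  obtain ⟨u, hu, huf, hu_sup, hau⟩ := exists_bounded hs ha
  obtain ⟨v, hv, hvg, hv_sup, hbv⟩ := exists_bounded ht hb
  refine (mul_le_mul' hau.le hbv.le).trans
    (lintegral_rpow_mul_lintegral_rpow_le_of_iSup_ne_top hu hv hh hu_sup hv_sup hs ht hst
      fun x y ↦ (H x y).trans' ?_)
  gcongr
  exacts [huf x, hvg y]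

end RealLine

namespace PrekopaLeindler

variable {E F : Type*} [AddCommGroup E] [Module ℝ E] [MeasurableSpace E]
  [AddCommGroup F] [Module ℝ F] [MeasurableSpace F] {μ : Measure E}

theorem dirac [MeasurableSingletonClass E] (x : E) : PrekopaLeindler (Measure.dirac x) := by
  intro s t _ _ hst f g h _ H
  simpa [← add_smul, hst] using H x x

theorem prod {ν : Measure F} [SFinite ν] (hμ : PrekopaLeindler μ) (hν : PrekopaLeindler ν) :
    PrekopaLeindler (μ.prod ν) := by
  intro s t hs ht hst f g h hh H
  calc (∫⁻ p, f p ∂μ.prod ν) ^ s * (∫⁻ p, g p ∂μ.prod ν) ^ t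
      ≤ (∫⁻ x, ∫⁻ y, f (x, y) ∂ν ∂μ) ^ s * (∫⁻ x, ∫⁻ y, g (x, y) ∂ν ∂μ) ^ t := by
        gcongr <;> exact lintegral_prod_le _
    _ ≤ ∫⁻ x, ∫⁻ y, h (x, y) ∂ν ∂μ :=
      hμ hs ht hst hh.lintegral_prod_right' fun x x' ↦
        hν hs ht hst (hh.comp measurable_prodMk_left) fun y y' ↦ H (x, y) (x', y')
    _ = ∫⁻ p, h p ∂μ.prod ν := (lintegral_prod _ hh.aemeasurable).symm

theorem map (hμ : PrekopaLeindler μ) (L : E →ₗ[ℝ] F) (hL : Measurable L) :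
    PrekopaLeindler (μ.map L) := by
  intro s t hs ht hst f g h hh H
  calc (∫⁻ y, f y ∂μ.map L) ^ s * (∫⁻ y, g y ∂μ.map L) ^ t
      ≤ (∫⁻ x, f (L x) ∂μ) ^ s * (∫⁻ x, g (L x) ∂μ) ^ t := by
        gcongr <;> exact lintegral_map_le _ _
    _ ≤ ∫⁻ x, h (L x) ∂μ := hμ hs ht hst (hh.comp hL) fun x y ↦ by simpa using H (L x) (L y)
    _ = ∫⁻ y, h y ∂μ.map L := (lintegral_map hh hL).symm

theorem smul (hμ : PrekopaLeindler μ) (c : ℝ≥0∞) : PrekopaLeindler (c • μ) := by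
  intro s t hs ht hst f g h hh H
  simp only [lintegral_smul_measure, smul_eq_mul]
  calc (c * ∫⁻ x, f x ∂μ) ^ s * (c * ∫⁻ x, g x ∂μ) ^ t
      = c ^ (s + t) * ((∫⁻ x, f x ∂μ) ^ s * (∫⁻ x, g x ∂μ) ^ t) := by
        rw [ENNReal.mul_rpow_of_nonneg _ _ hs.le, ENNReal.mul_rpow_of_nonneg _ _ ht.le,
          ENNReal.rpow_add_of_nonneg _ _ hs.le ht.le, mul_mul_mul_comm]
    _ ≤ c * ∫⁻ x, h x ∂μ := by
      rw [hst, ENNReal.rpow_one]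
      gcongr
      exact hμ hs ht hst hh H

end PrekopaLeindler

section Haar

theorem PrekopaLeindler.of_finrank_eq {E F : Type*}
    [NormedAddCommGroup E] [NormedSpace ℝ E] [FiniteDimensional ℝ E] [MeasurableSpace E]
    [BorelSpace E] [NormedAddCommGroup F] [NormedSpace ℝ F] [FiniteDimensional ℝ F]
    [MeasurableSpace F] [BorelSpace F] {μ : Measure E} [μ.IsAddHaarMeasure]
    (hμ : PrekopaLeindler μ) (h : finrank ℝ E = finrank ℝ F) (ν : Measure F)
    [ν.IsAddHaarMeasure] : PrekopaLeindler ν := by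
  let L : E ≃L[ℝ] F := ContinuousLinearEquiv.ofFinrankEq h
  have hmap : PrekopaLeindler (μ.map L) := hμ.map (L : E →ₗ[ℝ] F) L.continuous.measurable
  rw [Measure.isAddLeftInvariant_eq_smul ν (μ.map L)]
  exact hmap.smul _

theorem prekopaLeindler_volume_pi (n : ℕ) :
    PrekopaLeindler (volume : Measure (Fin n → ℝ)) := by
  induction n with
  | zero =>
    rw [Measure.volume_pi_eq_dirac 0]
    exact PrekopaLeindler.dirac 0
  | succ n ih =>
    exact (prekopaLeindler_volume_real.prod ih).of_finrank_eq (by simp [add_comm]) volume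

variable {E : Type*} [NormedAddCommGroup E] [NormedSpace ℝ E] [FiniteDimensional ℝ E]
  [MeasurableSpace E] [BorelSpace E] (μ : Measure E) [μ.IsAddHaarMeasure]

theorem prekopaLeindler_of_isAddHaarMeasure : PrekopaLeindler μ :=
  (prekopaLeindler_volume_pi (finrank ℝ E)).of_finrank_eq (by simp) μ

theorem lintegral_comp_inv_smul (f : E → ℝ≥0∞) {a : ℝ} (ha : 0 < a) :
    ∫⁻ x, f (a⁻¹ • x) ∂μ = ENNReal.ofReal (a ^ finrank ℝ E) * ∫⁻ x, f x ∂μ := by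
  calc ∫⁻ x, f (a⁻¹ • x) ∂μ = ∫⁻ x, f x ∂μ.map (a⁻¹ • ·) :=
        (lintegral_map_equiv f (MeasurableEquiv.smul₀ a⁻¹ (inv_ne_zero ha.ne'))).symm
    _ = ENNReal.ofReal (a ^ finrank ℝ E) * ∫⁻ x, f x ∂μ := by
      rw [Measure.map_addHaar_smul μ (inv_ne_zero ha.ne'), lintegral_smul_measure, inv_pow, inv_inv,
        abs_of_pos (by positivity), smul_eq_mul]

end Haar

section PartitionFunction

variable {E : Type*} [NormedAddCommGroup E] [NormedSpace ℝ E] {K : Set E} {φ : E → ℝ}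

/-- The partition function `Z(a) = ∫_K e^{-a φ}` of the Boltzmann weights of the energy `φ` on `K`
at inverse temperature `a`, with values in `[0, ∞]` so that no integrability is needed. -/
noncomputable def partitionFunction [MeasurableSpace E] (μ : Measure E) (K : Set E) (φ : E → ℝ)
    (a : ℝ) : ℝ≥0∞ :=
  ∫⁻ x in K, ENNReal.ofReal (exp (-a * φ x)) ∂μ

theorem indicator_exp_neg_rpow_mul_le (hφ : ConvexOn ℝ K φ) {b c s t : ℝ} (hb : 0 < b)
    (hc : 0 < c) (hs : 0 < s) (ht : 0 < t) (x y : E) :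
    K.indicator (fun z ↦ ENNReal.ofReal (exp (-b * φ z))) (b⁻¹ • x) ^ s *
        K.indicator (fun z ↦ ENNReal.ofReal (exp (-c * φ z))) (c⁻¹ • y) ^ t ≤
      K.indicator (fun z ↦ ENNReal.ofReal (exp (-(s * b + t * c) * φ z)))
        ((s * b + t * c)⁻¹ • (s • x + t • y)) := by
  by_cases hu : b⁻¹ • x ∈ K
  swap
  · simp [hu, hs]
  by_cases hv : c⁻¹ • y ∈ K
  swap
  · simp [hv, ht]
  have hp : 0 < s * b := mul_pos hs hb
  have hq : 0 < t * c := mul_pos ht hc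
  have hpq : 0 < s * b + t * c := add_pos hp hq
  have hz : (s * b + t * c)⁻¹ • (s • x + t • y) =
      (s * b / (s * b + t * c)) • b⁻¹ • x + (t * c / (s * b + t * c)) • c⁻¹ • y := by
    simp only [smul_add, smul_smul]
    congr 2 <;> field_simp
  have hmem : (s * b + t * c)⁻¹ • (s • x + t • y) ∈ K :=
    hz ▸ convex_iff_div.1 hφ.1 hu hv hp.le hq.le hpq
  have perspective : (s * b + t * c) * φ ((s * b + t * c)⁻¹ • (s • x + t • y)) ≤
      s * b * φ (b⁻¹ • x) + t * c * φ (c⁻¹ • y) := by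
    have key := (convexOn_iff_div.1 hφ).2 hu hv hp.le hq.le hpq
    rw [← hz, smul_eq_mul, smul_eq_mul] at key
    calc (s * b + t * c) * φ ((s * b + t * c)⁻¹ • (s • x + t • y))
        ≤ (s * b + t * c) * (s * b / (s * b + t * c) * φ (b⁻¹ • x) +
            t * c / (s * b + t * c) * φ (c⁻¹ • y)) := by gcongr
      _ = s * b * φ (b⁻¹ • x) + t * c * φ (c⁻¹ • y) := by field_simp
  rw [indicator_of_mem hu, indicator_of_mem hv, indicator_of_mem hmem,
    ENNReal.ofReal_rpow_of_pos (exp_pos _), ENNReal.ofReal_rpow_of_pos (exp_pos _),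
    ← ENNReal.ofReal_mul (by positivity), ← exp_mul, ← exp_mul, ← exp_add]
  gcongr
  linarith

variable [FiniteDimensional ℝ E] [MeasurableSpace E] [BorelSpace E] (μ : Measure E)
  [μ.IsAddHaarMeasure]

theorem partitionFunction_interior (hK : Convex ℝ K) (a : ℝ) :
    partitionFunction μ (interior K) φ a = partitionFunction μ K φ a :=
  setLIntegral_congr (interior_ae_eq_of_null_frontier (hK.addHaar_frontier μ))

theorem lintegral_indicator_exp_neg_comp_inv_smul (hK : MeasurableSet K) {a : ℝ} (ha : 0 < a) :
    ∫⁻ x, K.indicator (fun z ↦ ENNReal.ofReal (exp (-a * φ z))) (a⁻¹ • x) ∂μ =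
      ENNReal.ofReal (a ^ finrank ℝ E) * partitionFunction μ K φ a := by
  rw [lintegral_comp_inv_smul μ _ ha, lintegral_indicator hK, partitionFunction]

theorem measurable_indicator_exp_neg_comp_inv_smul (hφ : ConvexOn ℝ K φ) (a : ℝ) :
    Measurable fun x ↦
      (interior K).indicator (fun z ↦ ENNReal.ofReal (exp (-a * φ z))) (a⁻¹ • x) := by
  have hcont : ContinuousOn (fun z ↦ ENNReal.ofReal (exp (-a * φ z))) (interior K) :=
    ENNReal.continuous_ofReal.comp_continuousOn
      (continuous_exp.comp_continuousOn (hφ.continuousOn_interior.const_mul (-a)))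
  have hmeas : Measurable ((interior K).indicator fun z ↦ ENNReal.ofReal (exp (-a * φ z))) := by
    classical
    rw [← piecewise_eq_indicator]
    exact hcont.measurable_piecewise continuousOn_const isOpen_interior.measurableSet
  exact hmeas.comp (measurable_const_smul _)

theorem partitionFunction_logConcave (hφ : ConvexOn ℝ K φ) {b c s t : ℝ} (hb : 0 < b)
    (hc : 0 < c) (hs : 0 < s) (ht : 0 < t) (hst : s + t = 1) :
    (ENNReal.ofReal (b ^ finrank ℝ E) * partitionFunction μ K φ b) ^ s *
        (ENNReal.ofReal (c ^ finrank ℝ E) * partitionFunction μ K φ c) ^ t ≤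
      ENNReal.ofReal ((s * b + t * c) ^ finrank ℝ E) *
        partitionFunction μ K φ (s * b + t * c) := by
  have hint : MeasurableSet (interior K) := isOpen_interior.measurableSet
  have hconv : ConvexOn ℝ (interior K) φ := hφ.subset interior_subset hφ.1.interior
  -- On the interior of `K`, `φ` is continuous, hence measurable.
  simp only [← partitionFunction_interior μ hφ.1]
  rw [← lintegral_indicator_exp_neg_comp_inv_smul μ hint hb,
    ← lintegral_indicator_exp_neg_comp_inv_smul μ hint hc,
    ← lintegral_indicator_exp_neg_comp_inv_smul μ hint (by positivity)]
  exact prekopaLeindler_of_isAddHaarMeasure μ hs ht hst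
    (measurable_indicator_exp_neg_comp_inv_smul hφ _)
    (indicator_exp_neg_rpow_mul_le hconv hb hc hs ht)

theorem partitionFunction_mul_partitionFunction_le (hφ : ConvexOn ℝ K φ) {b c : ℝ} (hb : 0 < b)
    (hc : 0 < c) :
    (ENNReal.ofReal (b ^ finrank ℝ E) * partitionFunction μ K φ b) *
        (ENNReal.ofReal (c ^ finrank ℝ E) * partitionFunction μ K φ c) ≤
      (ENNReal.ofReal (((b + c) / 2) ^ finrank ℝ E) *
        partitionFunction μ K φ ((b + c) / 2)) ^ 2 := by
  have key := partitionFunction_logConcave μ hφ hb hc (s := 2⁻¹) (t := 2⁻¹) (by norm_num)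
    (by norm_num) (by norm_num)
  rwa [← ENNReal.mul_rpow_of_nonneg _ _ (by norm_num), ENNReal.rpow_inv_le_iff (by norm_num),
    ENNReal.rpow_two, show 2⁻¹ * b + 2⁻¹ * c = (b + c) / 2 by ring] at key

end PartitionFunction

section Gaussian

variable {E : Type*} [NormedAddCommGroup E] [NormedSpace ℝ E]

theorem convexOn_norm_sq {K : Set E} (hK : Convex ℝ K) : ConvexOn ℝ K fun x ↦ ‖x‖ ^ 2 :=
  (convexOn_norm hK).pow (fun _ _ ↦ norm_nonneg _) 2

theorem exp_neg_mul_sq_le {a u : ℝ} (ha : 0 < a) (hu : 0 ≤ u) (m : ℕ) :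
    exp (-a * u ^ 2) ≤ exp (1 + (4 * a)⁻¹) * m.factorial * (1 + u) ^ (-(m : ℝ)) := by
  have quadratic : -a * u ^ 2 ≤ (1 + (4 * a)⁻¹) - (1 + u) := by
    have : 0 ≤ a * (u - (2 * a)⁻¹) ^ 2 := by positivity
    have expand : a * (u - (2 * a)⁻¹) ^ 2 = a * u ^ 2 - u + (4 * a)⁻¹ := by
      field_simp
      ring
    linarith
  have hpow : (1 + u) ^ m / m.factorial ≤ exp (1 + u) :=
    pow_div_factorial_le_exp _ (by positivity) m
  calc exp (-a * u ^ 2) ≤ exp (1 + (4 * a)⁻¹) / exp (1 + u) := by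
        rw [← exp_sub]
        exact exp_le_exp.2 quadratic
    _ ≤ exp (1 + (4 * a)⁻¹) / ((1 + u) ^ m / m.factorial) := by gcongr
    _ = exp (1 + (4 * a)⁻¹) * m.factorial * (1 + u) ^ (-(m : ℝ)) := by
      rw [rpow_neg (by positivity), rpow_natCast]
      field_simp

variable [FiniteDimensional ℝ E] [MeasurableSpace E] [BorelSpace E] (μ : Measure E)
  [μ.IsAddHaarMeasure]

theorem integrable_exp_neg_mul_norm_sq {a : ℝ} (ha : 0 < a) :
    Integrable (fun x : E ↦ exp (-a * ‖x‖ ^ 2)) μ := by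
  have hdecay : Integrable (fun x : E ↦ (1 + ‖x‖) ^ (-((finrank ℝ E + 1 : ℕ) : ℝ))) μ :=
    integrable_one_add_norm (by simp)
  refine (hdecay.const_mul (exp (1 + (4 * a)⁻¹) * (finrank ℝ E + 1).factorial)).mono'
    (by fun_prop) (.of_forall fun x ↦ ?_)
  rw [norm_of_nonneg (exp_pos _).le]
  exact exp_neg_mul_sq_le ha (norm_nonneg x) _

theorem partitionFunction_norm_sq (K : Set E) {a : ℝ} (ha : 0 < a) :
    partitionFunction μ K (fun x ↦ ‖x‖ ^ 2) a =
      ENNReal.ofReal (∫ x in K, exp (-a * ‖x‖ ^ 2) ∂μ) :=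
  (ofReal_integral_eq_lintegral_ofReal (integrable_exp_neg_mul_norm_sq μ ha).integrableOn
    (.of_forall fun _ ↦ (exp_pos _).le)).symm

theorem gaussian_ratio_variance_bound_general {K : Set E} (hK : Convex ℝ K) {a b : ℝ}
    (hb : 0 < b) (hba : b < 2 * a) :
    (∫ x in K, exp (-b * ‖x‖ ^ 2) ∂μ) * (∫ x in K, exp (-(2 * a - b) * ‖x‖ ^ 2) ∂μ) ≤
      (a ^ 2 / (b * (2 * a - b))) ^ finrank ℝ E * (∫ x in K, exp (-a * ‖x‖ ^ 2) ∂μ) ^ 2 := by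
  have ha : 0 < a := by linarith
  have hc : 0 < 2 * a - b := by linarith
  have key := partitionFunction_mul_partitionFunction_le μ (convexOn_norm_sq hK) hb hc
  rw [show (b + (2 * a - b)) / 2 = a by ring, partitionFunction_norm_sq μ K ha,
    partitionFunction_norm_sq μ K hb, partitionFunction_norm_sq μ K hc,
    ← ENNReal.ofReal_mul (by positivity), ← ENNReal.ofReal_mul (by positivity),
    ← ENNReal.ofReal_mul (by positivity), ← ENNReal.ofReal_mul (by positivity),
    ← ENNReal.ofReal_pow (by positivity), ENNReal.ofReal_le_ofReal_iff (by positivity)] at key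
  rw [div_pow, div_mul_eq_mul_div, le_div_iff₀ (by positivity), mul_pow b]
  exact (by ring : _ = _).trans_le (key.trans_eq (by ring))

end Gaussian

theorem one_le_sq_div_mul {a b : ℝ} (hb : 0 < b) (hba : b < 2 * a) :
    1 ≤ a ^ 2 / (b * (2 * a - b)) := by
  rw [one_le_div (mul_pos hb (by linarith))]
  linarith [sq_nonneg (a - b)]

/-- Key inequality for the variance of the ratio estimator: for a convex body `K ⊆ ℝⁿ`
and `0 < b < 2a`,
`(∫_K e^{-b‖x‖²})(∫_K e^{-(2a-b)‖x‖²}) ≤ (a²/(b(2a-b)))^{n+1} (∫_K e^{-a‖x‖²})²`. -/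
theorem gaussian_ratio_variance_bound
    (n : ℕ)
    (K : Set (EuclideanSpace ℝ (Fin n)))
    (hKconv : Convex ℝ K) (hKcomp : IsCompact K) (hKne : (interior K).Nonempty)
    (a b : ℝ) (ha : 0 < a) (hb : 0 < b) (hba : b < 2 * a) :
    (∫ x in K, Real.exp (-b * ‖x‖^2)) * (∫ x in K, Real.exp (-(2 * a - b) * ‖x‖^2)) ≤
      (a ^ 2 / (b * (2 * a - b))) ^ (n + 1) * (∫ x in K, Real.exp (-a * ‖x‖^2)) ^ 2 := by
  refine (gaussian_ratio_variance_bound_general volume hKconv hb hba).trans ?_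
  gcongr
  exacts [one_le_sq_div_mul hb hba, by simp]
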